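/- Let g : ℝ → ℝ be a lift of a piecewise linear degree-one circle homeomorphism with k ≥ 2 break points, let p, q be coprime integers with q ≥ 1, and suppose the translation number of g equals p/q. Then the q-th iterate of g equals the translation x ↦ x + p if and only if there exists a continuous strictly increasing h : ℝ → ℝ with h(x+1) = h(x) + 1 which is piecewise linear with at most ⌊qk/2⌋ break points (i.e., there exist d ≤ ⌊qk/2⌋ and points 0 ≤ u_1 < … < u_d < 1 such that h is affine on each interval [u_i, u_{i+1}], with u_{d+1} = u_1 + 1) and which satisfies h(g(x)) = h(x) + p/q for all x ∈ ℝ. -/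

import Mathlib

/-- The right endpoint of the interval of definition starting at the break point
`t_i`: the next break point, or `t_1 + 1` for the last interval. -/
noncomputable def nextPt {k : ℕ} (t : Fin k → ℝ) (i : Fin k) : ℝ :=
  if h : (i : ℕ) + 1 < k then t ⟨(i : ℕ) + 1, h⟩ else t ⟨0, i.pos⟩ + 1

/-!
If `h` conjugates `g` to the rotation by `p / q`, iterating the conjugacy `q` times shows that
`g^[q]` is the translation by `p`. Conversely, if `g^[q]` is the translation by `p`, the average
of `id, g, …, g^[q - 1]` conjugates `g` to the rotation by `p / q`, and it can only break at points
whose orbit meets a break point of `g`. Modulo `ℤ`, these are the points `g^[j] (t i)` with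
`j < q`. Each of them is hit at least twice: if the orbit of `t i` met no other break point, then
along that orbit the translation `g^[j]`, where `j` is the period of `t i` modulo `ℤ`, would be `g`
followed by locally affine maps, and `g` would be affine near `t i`. Hence there are at most
`q * k / 2` break points.
-/

open Filter Function Set Topology

/-- `f` agrees with an affine function near `x`. The break points of a piecewise linear map are
the points at which this fails. -/
def IsAffineAt (f : ℝ → ℝ) (x : ℝ) : Prop :=
  ∃ α β : ℝ, f =ᶠ[𝓝 x] fun y => α * y + β

namespace IsAffineAt

variable {f g : ℝ → ℝ} {x : ℝ}

theorem of_forall {α β : ℝ} (h : ∀ y, f y = α * y + β) : IsAffineAt f x :=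
  ⟨α, β, Eventually.of_forall h⟩

theorem analyticAt (h : IsAffineAt f x) : AnalyticAt ℝ f x := by
  obtain ⟨α, β, hf⟩ := h
  exact AnalyticAt.congr (by fun_prop) hf.symm

theorem comp (hg : IsAffineAt g (f x)) (hf : IsAffineAt f x) : IsAffineAt (g ∘ f) x := by
  have hfx : Tendsto f (𝓝 x) (𝓝 (f x)) := hf.analyticAt.continuousAt
  obtain ⟨α, β, hg⟩ := hg
  obtain ⟨γ, δ, hf⟩ := hf
  refine ⟨α * γ, α * δ + β, ?_⟩
  filter_upwards [hfx.eventually hg, hf] with y hgy hfy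
  rw [comp_apply, hgy, hfy]
  ring

theorem of_comp (hinj : Injective g) (hg : IsAffineAt g (f x)) (hf : ContinuousAt f x)
    (h : IsAffineAt (g ∘ f) x) : IsAffineAt f x := by
  obtain ⟨α, β, hg⟩ := hg
  obtain ⟨γ, δ, h⟩ := h
  have hα : α ≠ 0 := by
    rintro rfl
    obtain ⟨y, hgy, hy⟩ :=
      ((hg.filter_mono nhdsWithin_le_nhds).and (self_mem_nhdsWithin (s := {f x}ᶜ))).exists
    exact hy (hinj (by rw [hgy, hg.self_of_nhds]; ring))
  refine ⟨γ / α, (δ - β) / α, ?_⟩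
  filter_upwards [hf.eventually hg, h] with y hgy hy
  rw [comp_apply, hgy] at hy
  field_simp
  linarith

theorem iterate {n : ℕ} (h : ∀ m < n, IsAffineAt f (f^[m] x)) : IsAffineAt f^[n] x := by
  induction n with
  | zero => exact of_forall (α := 1) (β := 0) (by simp)
  | succ n ih =>
    rw [iterate_succ']
    exact (h n n.lt_succ_self).comp (ih fun m hm => h m (hm.trans n.lt_succ_self))

theorem birkhoffAverage {n : ℕ} (h : ∀ m < n, IsAffineAt f (f^[m] x)) :
    IsAffineAt (birkhoffAverage ℝ f id n) x := by
  have hiter : ∀ j : ℕ, ∃ α β : ℝ, j < n → f^[j] =ᶠ[𝓝 x] fun y => α * y + β := by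
    intro j
    by_cases hj : j < n
    · obtain ⟨α, β, hαβ⟩ := iterate fun m (hm : m < j) => h m (hm.trans hj)
      exact ⟨α, β, fun _ => hαβ⟩
    · exact ⟨0, 0, fun hjn => absurd hjn hj⟩
  choose α β hαβ using hiter
  refine ⟨(n : ℝ)⁻¹ * ∑ j ∈ Finset.range n, α j, (n : ℝ)⁻¹ * ∑ j ∈ Finset.range n, β j, ?_⟩
  have hall : ∀ᶠ y in 𝓝 x, ∀ j ∈ Finset.range n, f^[j] y = α j * y + β j :=
    (Finset.eventually_all _).2 fun j hj => hαβ j (Finset.mem_range.1 hj)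
  filter_upwards [hall] with y hy
  simp only [_root_.birkhoffAverage, birkhoffSum, id_eq, smul_eq_mul]
  rw [Finset.sum_congr rfl hy, Finset.sum_add_distrib, ← Finset.sum_mul]
  ring

theorem left_slope_eq_right_slope (h : IsAffineAt f x) {l r : ℝ}
    (hl : ∀ᶠ y in 𝓝[<] x, f y = f x + l * (y - x))
    (hr : ∀ᶠ y in 𝓝[>] x, f y = f x + r * (y - x)) : l = r := by
  obtain ⟨α, β, h⟩ := h
  have hx := h.self_of_nhds
  obtain ⟨y, ⟨hy, hly⟩, hyx⟩ :=
    (((h.filter_mono nhdsWithin_le_nhds).and hl).and self_mem_nhdsWithin).exists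
  obtain ⟨z, ⟨hz, hrz⟩, hzx⟩ :=
    (((h.filter_mono nhdsWithin_le_nhds).and hr).and self_mem_nhdsWithin).exists
  have hαl : α = l := mul_right_cancel₀ (sub_ne_zero.2 (ne_of_lt hyx)) (by linarith)
  have hαr : α = r := mul_right_cancel₀ (sub_ne_zero.2 (ne_of_gt hzx)) (by linarith)
  exact hαl.symm.trans hαr

theorem exists_forall_mem_Icc_eq {a b : ℝ} (hab : a < b) (hf : ContinuousOn f (Icc a b))
    (h : ∀ y ∈ Ioo a b, IsAffineAt f y) : ∃ α β : ℝ, ∀ y ∈ Icc a b, f y = α * y + β := by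
  obtain ⟨c, hc⟩ := nonempty_Ioo.2 hab
  obtain ⟨α, β, hαβ⟩ := h c hc
  have hIoo : EqOn f (fun y => α * y + β) (Ioo a b) :=
    AnalyticOnNhd.eqOn_of_preconnected_of_eventuallyEq (𝕜 := ℝ) (fun y hy => (h y hy).analyticAt)
      (fun y _ => by fun_prop) isPreconnected_Ioo hc hαβ
  exact ⟨α, β, hIoo.of_subset_closure hf (by fun_prop) Ioo_subset_Icc_self
    (closure_Ioo hab.ne).ge⟩

end IsAffineAt

/-- `h` is affine on each of the intervals cut out modulo `1` by at most `N` points of `[0, 1)`,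
the last interval running from the largest point to the smallest one shifted by `1`. For the lift
`h` of a circle homeomorphism this says that `h` is piecewise linear with at most `N` break
points; at least one point is required, so that the intervals cover the circle. -/
def IsPiecewiseAffine (h : ℝ → ℝ) (N : ℕ) : Prop :=
  ∃ d : ℕ, 1 ≤ d ∧ d ≤ N ∧ ∃ u : Fin d → ℝ,
    StrictMono u ∧ (∀ i, u i ∈ Ico (0 : ℝ) 1) ∧
    ∀ i : Fin d, ∃ α β : ℝ, ∀ x ∈ Icc (u i) (nextPt u i), h x = α * x + β

section NextPt

variable {k : ℕ} {t : Fin k → ℝ}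

theorem lt_nextPt (ht : StrictMono t) (ht1 : ∀ i, t i < t ⟨0, i.pos⟩ + 1) (i : Fin k) :
    t i < nextPt t i := by
  unfold nextPt
  split_ifs
  · exact ht (Nat.lt_succ_self _)
  · exact ht1 i

theorem exists_nextPt_add_intCast_eq (t : Fin k → ℝ) (i : Fin k) :
    ∃ (j : Fin k) (n : ℤ), i = ⟨(j + 1) % k, Nat.mod_lt _ j.pos⟩ ∧ nextPt t j + n = t i := by
  obtain ⟨_ | i, hi⟩ := i
  · refine ⟨⟨k - 1, by omega⟩, -1, ?_, ?_⟩
    · simp [Nat.sub_add_cancel hi]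
    · simp [nextPt, Nat.sub_add_cancel hi]
  · exact ⟨⟨i, by omega⟩, 0, by simp [Nat.mod_eq_of_lt hi], by simp [nextPt, hi]⟩

theorem exists_mem_Ico_nextPt (t : Fin k → ℝ) (hk : 0 < k) (x : ℝ) :
    ∃ (i : Fin k) (n : ℤ), x ∈ Ico (t i + n) (nextPt t i + n) := by
  have h0 : t ⟨0, hk⟩ ≤ x - ⌊x - t ⟨0, hk⟩⌋ := by linarith [Int.floor_le (x - t ⟨0, hk⟩)]
  have h1 : x - ⌊x - t ⟨0, hk⟩⌋ < t ⟨0, hk⟩ + 1 := by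
    linarith [Int.lt_floor_add_one (x - t ⟨0, hk⟩)]
  set y := x - ⌊x - t ⟨0, hk⟩⌋
  obtain ⟨i, hi, hmax⟩ := (Finset.univ.filter fun i => t i ≤ y).exists_max_image id
    ⟨⟨0, hk⟩, by simpa using h0⟩
  simp only [Finset.mem_filter_univ, id_eq] at hi hmax
  have hnext : y < nextPt t i := by
    unfold nextPt
    split_ifs with h
    · by_contra! hle
      simpa [Fin.le_def] using hmax _ hle
    · exact h1
  exact ⟨i, ⌊x - t ⟨0, hk⟩⌋, by linarith, by linarith⟩

theorem add_intCast_notMem_Ioo_nextPt (ht : StrictMono t)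
    (ht1 : ∀ i, t i < t ⟨0, i.pos⟩ + 1) (i j : Fin k) (n : ℤ) :
    t j + n ∉ Ioo (t i) (nextPt t i) := by
  rintro ⟨hl, hr⟩
  have hmin : ∀ m, t ⟨0, i.pos⟩ ≤ t m := fun m => ht.monotone (Nat.zero_le m)
  have hnext : nextPt t i ≤ t ⟨0, i.pos⟩ + 1 := by
    unfold nextPt
    split_ifs
    · exact (ht1 _).le
    · exact le_rfl
  obtain rfl : n = 0 := by
    have hn1 : (n : ℝ) < 1 := by linarith [hmin j]
    have hn0 : (-1 : ℝ) < n := by linarith [hmin i, ht1 j]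
    norm_cast at hn1 hn0
    omega
  rw [Int.cast_zero, add_zero] at hl hr
  have hij : (i : ℕ) < j := ht.lt_iff_lt.1 hl
  unfold nextPt at hr
  split_ifs at hr with h
  · have hji : (j : ℕ) < i + 1 := ht.lt_iff_lt.1 hr
    omega
  · omega

theorem isPiecewiseAffine_of_isAffineAt {h : ℝ → ℝ} (hh : Continuous h) {U : Finset ℝ}
    (hU : U.Nonempty) (hU01 : ∀ x ∈ U, x ∈ Ico (0 : ℝ) 1)
    {N : ℕ} (hUN : U.card ≤ N) (haff : ∀ x, Int.fract x ∉ U → IsAffineAt h x) :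
    IsPiecewiseAffine h N := by
  let u := U.orderEmbOfFin rfl
  have hu : StrictMono u := u.strictMono
  have hu01 : ∀ i, u i ∈ Ico (0 : ℝ) 1 := fun i => hU01 _ (U.orderEmbOfFin_mem rfl i)
  have hu1 : ∀ i, u i < u ⟨0, i.pos⟩ + 1 := fun i => by linarith [(hu01 i).2, (hu01 ⟨0, i.pos⟩).1]
  refine ⟨U.card, hU.card_pos, hUN, u, hu, hu01, fun i =>
    IsAffineAt.exists_forall_mem_Icc_eq (lt_nextPt hu hu1 i) hh.continuousOn fun x hx =>
      haff x fun hxU => ?_⟩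
  obtain ⟨j, hj⟩ : Int.fract x ∈ range u := by rwa [U.range_orderEmbOfFin rfl]
  refine add_intCast_notMem_Ioo_nextPt hu hu1 i j ⌊x⌋ ?_
  rwa [hj, Int.fract_add_floor]

end NextPt

section BreakPoints

variable {k : ℕ} {t s : Fin k → ℝ} {f : CircleDeg1Lift}

theorem apply_eq_of_mem_Icc_nextPt
    (haff : ∀ i, ∀ x ∈ Icc (t i) (nextPt t i), f x = f (t i) + s i * (x - t i))
    {i : Fin k} {n : ℤ} {x : ℝ} (hx : x ∈ Icc (t i + n) (nextPt t i + n)) :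
    f x = f (t i) + n + s i * (x - (t i + n)) := by
  have hfx := haff i (x - n) ⟨by linarith [hx.1], by linarith [hx.2]⟩
  rw [f.map_sub_int] at hfx
  linarith

theorem not_isAffineAt_of_slope_ne (ht : StrictMono t) (ht1 : ∀ i, t i < t ⟨0, i.pos⟩ + 1)
    (hs : ∀ i : Fin k, s i ≠ s ⟨(i + 1) % k, Nat.mod_lt _ i.pos⟩)
    (haff : ∀ i, ∀ x ∈ Icc (t i) (nextPt t i), f x = f (t i) + s i * (x - t i)) (i : Fin k) :
    ¬ IsAffineAt f (t i) := by
  obtain ⟨j, n, rfl, hn⟩ := exists_nextPt_add_intCast_eq t i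
  intro h
  refine hs j (h.left_slope_eq_right_slope ?_ ?_)
  · have hlt : t j + n < nextPt t j + n := by linarith [lt_nextPt ht ht1 j]
    have hend := apply_eq_of_mem_Icc_nextPt haff (right_mem_Icc.2 hlt.le)
    rw [← hn]
    filter_upwards [Icc_mem_nhdsLT hlt] with y hy
    rw [apply_eq_of_mem_Icc_nextPt haff hy, hend]
    ring
  · filter_upwards [Icc_mem_nhdsGT (lt_nextPt ht ht1 _)] with y hy
    exact haff _ y hy

theorem exists_eq_add_intCast_of_not_isAffineAt (hk : 0 < k)
    (haff : ∀ i, ∀ x ∈ Icc (t i) (nextPt t i), f x = f (t i) + s i * (x - t i))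
    {x : ℝ} (hx : ¬ IsAffineAt f x) : ∃ (i : Fin k) (n : ℤ), x = t i + n := by
  obtain ⟨i, n, hle, hlt⟩ := exists_mem_Ico_nextPt t hk x
  refine ⟨i, n, hle.eq_of_not_lt' fun hgt => hx ?_⟩
  refine ⟨s i, f (t i) + n - s i * (t i + n), ?_⟩
  filter_upwards [Icc_mem_nhds hgt hlt] with y hy
  rw [apply_eq_of_mem_Icc_nextPt haff hy]
  ring

end BreakPoints

section FiniteOrder

variable {f : CircleDeg1Lift} {p : ℤ} {q : ℕ}

theorem iterate_eq_add_intCast_of_apply (hq : 0 < q) (hf : f^[q] = fun x => x + (p : ℝ)) {m : ℕ}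
    {n : ℤ} {x₀ : ℝ} (hx₀ : f^[m] x₀ = x₀ + n) (x : ℝ) : f^[m] x = x + n := by
  have hpow : ∀ y, (f ^ m)^[q] y = y + m * p := fun y => by
    rw [CircleDeg1Lift.coe_pow, ← iterate_mul, mul_comm, iterate_mul, hf, add_right_iterate]
    simp
  rw [← CircleDeg1Lift.coe_pow] at hx₀ ⊢
  have hqn : (m * p : ℝ) = q * n := by
    have hpow₀ := hpow x₀
    rw [(CircleDeg1Lift.iterate_pos_eq_iff _ hq).2 hx₀] at hpow₀
    linarith
  rw [← CircleDeg1Lift.iterate_pos_eq_iff _ hq, hpow, hqn]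

theorem bijective_of_iterate_eq (hq : 0 < q) (hf : f^[q] = fun x => x + (p : ℝ)) :
    Bijective f := by
  have hbij : Bijective f^[q] := by
    rw [hf]
    exact (Equiv.addRight (p : ℝ)).bijective
  obtain ⟨m, rfl⟩ := Nat.exists_eq_add_one.2 hq
  have hinj : Injective (f^[m] ∘ f) := iterate_succ f m ▸ hbij.injective
  have hsurj : Surjective (f ∘ f^[m]) := iterate_succ' f m ▸ hbij.surjective
  exact ⟨hinj.of_comp, hsurj.of_comp⟩

theorem continuous_of_iterate_eq (hq : 0 < q) (hf : f^[q] = fun x => x + (p : ℝ)) :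
    Continuous f :=
  f.monotone.continuous_of_surjective (bijective_of_iterate_eq hq hf).surjective

theorem exists_iterate_not_isAffineAt (hq : 0 < q) (hf : f^[q] = fun x => x + (p : ℝ)) {x : ℝ}
    (hx : ¬ IsAffineAt f x) :
    ∃ m < q, ¬ IsAffineAt f (f^[m] x) ∧ ∀ n : ℤ, f^[m] x ≠ x + n := by
  classical
  have hper : ∃ j, 0 < j ∧ ∃ n : ℤ, f^[j] x = x + n := ⟨q, hq, p, by rw [hf]⟩
  obtain ⟨hj, n, hjn⟩ := Nat.find_spec hper
  have hmin : ∀ m, 0 < m → m < Nat.find hper → ∀ n : ℤ, f^[m] x ≠ x + n :=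
    fun m hm hmj n hn => Nat.find_min hper hmj ⟨hm, n, hn⟩
  have hjq : Nat.find hper ≤ q := Nat.find_min' hper ⟨hq, p, by rw [hf]⟩
  obtain ⟨j, hj⟩ := Nat.exists_eq_add_one.2 hj
  rw [hj] at hjn hmin hjq
  by_contra! hcon
  have haffine : ∀ m < j, IsAffineAt f (f^[m] (f x)) := fun m hm => by
    by_contra hbreak
    obtain ⟨n, hn⟩ := hcon (m + 1) (by omega) hbreak
    exact hmin (m + 1) m.succ_pos (by omega) n hn
  have htrans : IsAffineAt (f^[j] ∘ f) x :=
    .of_forall (α := 1) (β := n) fun y => by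
      rw [one_mul, ← iterate_succ, iterate_eq_add_intCast_of_apply hq hf hjn]
  exact hx (.of_comp ((bijective_of_iterate_eq hq hf).injective.iterate j) (.iterate haffine)
    (continuous_of_iterate_eq hq hf).continuousAt htrans)

theorem exists_iterate_eq_iterate_mod_add_intCast (hf : f^[q] = fun x => x + (p : ℝ)) (j : ℕ)
    (x : ℝ) : ∃ n : ℤ, f^[j] x = f^[j % q] x + n := by
  refine ⟨(j / q) • p, ?_⟩
  conv_lhs => rw [← Nat.mod_add_div j q, iterate_add_apply, iterate_mul, hf, add_right_iterate]
  simpa only [nsmul_eq_mul, Int.cast_mul, Int.cast_natCast] using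
    ((f.commute_add_int ((j / q) • p)).iterate_left (j % q)) x

theorem fract_iterate_eq (hf : f^[q] = fun x => x + (p : ℝ)) {m : ℕ} (hm : m ≤ q) {x y : ℝ} {n : ℤ}
    (hxy : f^[m] x = y + n) (j : ℕ) :
    Int.fract (f^[j] x) = Int.fract (f^[(j + (q - m)) % q] y) := by
  have hint : ∀ (i : ℕ) (z : ℝ) (l : ℤ), f^[i] (z + l) = f^[i] z + l := fun i z l =>
    ((f.commute_add_int l).iterate_left i) z
  obtain ⟨l, hl⟩ := exists_iterate_eq_iterate_mod_add_intCast hf (j + (q - m)) y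
  refine Int.fract_eq_fract.2 ⟨l + n - p, ?_⟩
  have hround : f^[j] x + p = f^[j + (q - m)] (f^[m] x) := by
    rw [← iterate_add_apply, add_assoc, Nat.sub_add_cancel hm, iterate_add_apply, hf, hint]
  rw [hxy, hint, hl] at hround
  push_cast
  linarith

/-- The fractional parts of the first `q` iterates of the points of `T`: when `f^[q]` is an integer
translation, these represent the orbits of `T` on the circle `ℝ / ℤ`. -/
noncomputable def orbitFract (f : CircleDeg1Lift) (q : ℕ) (T : Finset ℝ) : Finset ℝ :=
  (T ×ˢ Finset.range q).image fun z => Int.fract (f^[z.2] z.1)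

variable {T : Finset ℝ}

theorem mem_orbitFract {u : ℝ} :
    u ∈ orbitFract f q T ↔ ∃ x ∈ T, ∃ j < q, Int.fract (f^[j] x) = u := by
  simp [orbitFract, and_assoc]

theorem mem_Ico_of_mem_orbitFract {u : ℝ} (hu : u ∈ orbitFract f q T) : u ∈ Ico (0 : ℝ) 1 := by
  obtain ⟨x, -, j, -, rfl⟩ := mem_orbitFract.1 hu
  exact ⟨Int.fract_nonneg _, Int.fract_lt_one _⟩

theorem orbitFract_nonempty (hq : 0 < q) (hT : T.Nonempty) : (orbitFract f q T).Nonempty :=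
  (hT.product (Finset.nonempty_range_iff.2 hq.ne')).image _

theorem card_orbitFract_le (hf : f^[q] = fun x => x + (p : ℝ))
    (hT : ∀ x ∈ T, ∃ m < q, ∃ y ∈ T, y ≠ x ∧ ∃ n : ℤ, f^[m] x = y + n) :
    (orbitFract f q T).card ≤ q * T.card / 2 := by
  rw [Nat.le_div_iff_mul_le two_pos, mul_comm, mul_comm q, ← Finset.card_range q,
    ← Finset.card_product, Finset.card_range]
  refine Finset.mul_card_image_le_card _ _ fun u hu => ?_
  obtain ⟨x, hx, j, hj, rfl⟩ := mem_orbitFract.1 hu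
  obtain ⟨m, hm, y, hy, hyx, n, hn⟩ := hT x hx
  have hq : 0 < q := by omega
  refine Finset.one_lt_card.2 ⟨(x, j), ?_, (y, (j + (q - m)) % q), ?_, ?_⟩
  · simp [hx, hj]
  · simp [hy, Nat.mod_lt _ hq, fract_iterate_eq hf hm.le hn j]
  · exact fun h => hyx (congrArg Prod.fst h).symm

theorem isAffineAt_iterate_of_fract_notMem (hf : f^[q] = fun x => x + (p : ℝ))
    (hT : ∀ x, ¬ IsAffineAt f x → ∃ y ∈ T, ∃ n : ℤ, x = y + n) {x : ℝ}
    (hx : Int.fract x ∉ orbitFract f q T) {m : ℕ} (hm : m < q) : IsAffineAt f (f^[m] x) := by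
  by_contra hbreak
  obtain ⟨y, hy, n, hn⟩ := hT _ hbreak
  exact hx (mem_orbitFract.2 ⟨y, hy, _, Nat.mod_lt _ (by omega),
    (fract_iterate_eq hf hm.le hn 0).symm⟩)

end FiniteOrder

section Conjugacy

theorem strictMono_birkhoffAverage_id {f : ℝ → ℝ} (hf : StrictMono f) {n : ℕ} (hn : 0 < n) :
    StrictMono (birkhoffAverage ℝ f id n) := fun _ _ hxy =>
  mul_lt_mul_of_pos_left
    (Finset.sum_lt_sum_of_nonempty (Finset.nonempty_range_iff.2 hn.ne') fun j _ =>
      hf.iterate j hxy)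
    (by positivity)

theorem continuous_birkhoffAverage_id {f : ℝ → ℝ} (hf : Continuous f) (n : ℕ) :
    Continuous (birkhoffAverage ℝ f id n) := by
  have hsum : Continuous (birkhoffSum f id n) := continuous_finsetSum _ fun j _ => hf.iterate j
  exact hsum.const_smul (n : ℝ)⁻¹

theorem birkhoffAverage_id_add_one (f : CircleDeg1Lift) {n : ℕ} (hn : 0 < n) (x : ℝ) :
    birkhoffAverage ℝ f id n (x + 1) = birkhoffAverage ℝ f id n x + 1 := by
  have hiter : ∀ j, f^[j] (x + 1) = f^[j] x + 1 := fun j => by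
    rw [← CircleDeg1Lift.coe_pow, CircleDeg1Lift.map_add_one]
  simp only [birkhoffAverage, birkhoffSum, id_eq, hiter, Finset.sum_add_distrib, Finset.sum_const,
    Finset.card_range, smul_eq_mul, nsmul_eq_mul, mul_one, mul_add]
  rw [inv_mul_cancel₀ (by positivity)]

theorem birkhoffAverage_id_apply {f : ℝ → ℝ} {q : ℕ} {c : ℝ} (hf : f^[q] = fun x => x + c)
    (x : ℝ) : birkhoffAverage ℝ f id q (f x) = birkhoffAverage ℝ f id q x + c / q := by
  rw [← sub_eq_iff_eq_add', birkhoffAverage_apply_sub_birkhoffAverage, hf, id_eq, id_eq,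
    add_sub_cancel_left, smul_eq_mul, inv_mul_eq_div]

theorem iterate_eq_add_intCast_of_conj {f : ℝ → ℝ} {h : CircleDeg1Lift} (hh : Injective h) {p : ℤ}
    {q : ℕ} (hq : q ≠ 0) (hf : ∀ x, h (f x) = h x + (p : ℝ) / q) :
    f^[q] = fun x => x + (p : ℝ) := by
  have hsemi : Semiconj h f (· + (p : ℝ) / q) := hf
  funext x
  apply hh
  rw [(hsemi.iterate_right q).eq, add_right_iterate, nsmul_eq_mul, h.map_add_int,
    mul_div_cancel₀ _ (Nat.cast_ne_zero.2 hq)]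

theorem exists_piecewiseAffine_conj {f : CircleDeg1Lift} {p : ℤ} {q : ℕ} (hq : 0 < q)
    (hf : f^[q] = fun x => x + (p : ℝ)) {T : Finset ℝ} (hT₀ : T.Nonempty)
    (hT : ∀ x ∈ T, ¬ IsAffineAt f x)
    (hT' : ∀ x, ¬ IsAffineAt f x → ∃ y ∈ T, ∃ n : ℤ, x = y + n) :
    ∃ h : ℝ → ℝ, Continuous h ∧ StrictMono h ∧ (∀ x, h (x + 1) = h x + 1) ∧
      IsPiecewiseAffine h (q * T.card / 2) ∧ ∀ x, h (f x) = h x + (p : ℝ) / q := by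
  have hreturn : ∀ x ∈ T, ∃ m < q, ∃ y ∈ T, y ≠ x ∧ ∃ n : ℤ, f^[m] x = y + n := fun x hx => by
    obtain ⟨m, hm, hbreak, hne⟩ := exists_iterate_not_isAffineAt hq hf (hT x hx)
    obtain ⟨y, hy, n, hn⟩ := hT' _ hbreak
    exact ⟨m, hm, y, hy, fun hyx => hne n (hyx ▸ hn), n, hn⟩
  have hmono : StrictMono f :=
    f.monotone.strictMono_of_injective (bijective_of_iterate_eq hq hf).injective
  have hh := continuous_birkhoffAverage_id (continuous_of_iterate_eq hq hf) q
  have hPL : IsPiecewiseAffine (birkhoffAverage ℝ f id q) (q * T.card / 2) :=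
    isPiecewiseAffine_of_isAffineAt hh (orbitFract_nonempty hq hT₀)
      (fun _ => mem_Ico_of_mem_orbitFract) (card_orbitFract_le hf hreturn) fun _ hx =>
        .birkhoffAverage fun _ => isAffineAt_iterate_of_fract_notMem hf hT' hx
  exact ⟨birkhoffAverage ℝ f id q, hh, strictMono_birkhoffAverage_id hmono hq,
    birkhoffAverage_id_add_one f hq, hPL, birkhoffAverage_id_apply hf⟩

end Conjugacy

theorem stmt16_general {k : ℕ} (hk : 0 < k) {g : CircleDeg1Lift} {t s : Fin k → ℝ}
    (ht : StrictMono t) (ht1 : ∀ i, t i < t ⟨0, i.pos⟩ + 1)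
    (hs : ∀ i : Fin k, s i ≠ s ⟨(i + 1) % k, Nat.mod_lt _ i.pos⟩)
    (haff : ∀ i, ∀ x ∈ Icc (t i) (nextPt t i), g x = g (t i) + s i * (x - t i))
    {p : ℤ} {q : ℕ} (hq : 0 < q) :
    (g^[q] = fun x => x + (p : ℝ)) ↔
    ∃ h : ℝ → ℝ, Continuous h ∧ StrictMono h ∧ (∀ x, h (x + 1) = h x + 1) ∧
      IsPiecewiseAffine h (q * k / 2) ∧ ∀ x, h (g x) = h x + (p : ℝ) / q := by
  refine ⟨fun hg => ?_, fun ⟨h, _, hm, h1, _, hconj⟩ =>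
    iterate_eq_add_intCast_of_conj (h := ⟨⟨h, hm.monotone⟩, h1⟩) hm.injective hq.ne' hconj⟩
  have hT' : ∀ x, ¬ IsAffineAt g x → ∃ y ∈ Finset.univ.image t, ∃ n : ℤ, x = y + n :=
    fun x hx => by simpa using exists_eq_add_intCast_of_not_isAffineAt hk haff hx
  have hcard : q * (Finset.univ.image t).card / 2 = q * k / 2 := by
    rw [Finset.card_image_of_injective _ ht.injective, Finset.card_fin]
  rw [← hcard]
  exact exists_piecewiseAffine_conj hq hg
    ⟨_, Finset.mem_image_of_mem t (Finset.mem_univ ⟨0, hk⟩)⟩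
    (by simpa using not_isAffineAt_of_slope_ne ht ht1 hs haff) hT'

/-- Conjugacy characterization of pinch points for PL circle homeomorphisms:
if `g` is a lift of a PL degree-one circle homeomorphism with `k ≥ 2` break
points `0 = t_1 < ⋯ < t_k < 1`, slopes `s_i`, and translation number `p/q`
(`p, q` coprime, `q ≥ 1`), then `g^[q]` is the translation by `p` iff `g` is
conjugate to the rotation by `p/q` via a PL circle homeomorphism lift `h` with
at most `⌊qk/2⌋` break points. -/
theorem stmt16 (k : ℕ) (hk : 2 ≤ k) (g : ℝ → ℝ) (hcont : Continuous g)
    (hmono : StrictMono g) (hdeg : ∀ x, g (x + 1) = g x + 1)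
    (t s : Fin k → ℝ)
    (ht0 : t ⟨0, by omega⟩ = 0) (htmono : StrictMono t) (ht1 : ∀ i, t i < 1)
    (hs : ∀ i, 0 < s i)
    (hsne : ∀ i : Fin k, s i ≠ s ⟨((i : ℕ) + 1) % k, Nat.mod_lt _ i.pos⟩)
    (haff : ∀ i : Fin k, ∀ x ∈ Set.Icc (t i) (nextPt t i),
      g x = g (t i) + s i * (x - t i))
    (p : ℤ) (q : ℕ) (hq : 1 ≤ q) (hpq : Int.gcd p q = 1)
    (hrot : Filter.Tendsto (fun m : ℕ => g^[m] 0 / m) Filter.atTop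
      (nhds ((p : ℝ) / q))) :
    (g^[q] = fun x => x + (p : ℝ)) ↔
    ∃ h : ℝ → ℝ, Continuous h ∧ StrictMono h ∧ (∀ x, h (x + 1) = h x + 1) ∧
      (∃ d : ℕ, 1 ≤ d ∧ d ≤ q * k / 2 ∧ ∃ u : Fin d → ℝ,
        StrictMono u ∧ (∀ i, u i ∈ Set.Ico (0 : ℝ) 1) ∧
        ∀ i : Fin d, ∃ α β : ℝ,
          ∀ x ∈ Set.Icc (u i) (nextPt u i), h x = α * x + β) ∧
      (∀ x, h (g x) = h x + (p : ℝ) / q) :=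
  stmt16_general (g := ⟨⟨g, hmono.monotone⟩, hdeg⟩) (by omega) htmono
    (fun i => by simpa [ht0] using ht1 i) hsne haff hq
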